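/- Every almost two-coloured perfect matching of the graph H has the following three properties: (1) exactly one of the three edges ab, mi, ln is monochromatic; (2) the vertices b, i, l all receive the same colour; (3) the vertices o, p, q, r all receive the colour opposite to that of b, i, l. -/

import Mathlib

/-- An almost two-coloured perfect matching of `G`: a two-colouring (black/white,
modelled by `Bool`) of the vertices in which every vertex of degree at least two
(i.e. having two distinct neighbours) has exactly one neighbour of the same colour. -/
def IsAlmostTCPM {V : Type*} (G : SimpleGraph V) (c : V → Bool) : Prop :=
  ∀ v, (∃ w₁ w₂, w₁ ≠ w₂ ∧ G.Adj v w₁ ∧ G.Adj v w₂) →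
    ∃! w, G.Adj v w ∧ c w = c v

/-- The vertices of the graph `H`. -/
inductive HV | a | b | c | d | e | f | g | h | i | j | k | l | m | n | o | p | q | r
deriving DecidableEq

open HV in
/-- The edges of the graph `H`. -/
def HEdges : List (HV × HV) :=
  [(a,b),(b,c),(b,d),(c,e),(c,f),(e,f),(d,g),(d,h),(g,h),(e,i),(f,j),(g,k),
   (h,l),(m,i),(n,l),(j,k),(i,o),(j,o),(o,q),(k,p),(l,p),(p,r)]

/-- The graph `H`. -/
def HG : SimpleGraph HV := SimpleGraph.fromRel (fun x y => (x, y) ∈ HEdges)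

/-- If a vertex triangle `x y z` has outer neighbours `u v w`, the latter share a colour,
and exactly one triangle vertex has that colour. -/
theorem triangle_forces : ∀ u x y z v w : Bool,
    ((u = x ∧ y = !x ∧ z = !x) ∨ (u = !x ∧ y = x ∧ z = !x) ∨ (u = !x ∧ y = !x ∧ z = x)) →
    ((x = y ∧ z = !y ∧ v = !y) ∨ (x = !y ∧ z = y ∧ v = !y) ∨ (x = !y ∧ z = !y ∧ v = y)) →
    ((x = z ∧ y = !z ∧ w = !z) ∨ (x = !z ∧ y = z ∧ w = !z) ∨ (x = !z ∧ y = !z ∧ w = z)) →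
    u = v ∧ u = w ∧ ((x = u ∧ y = !u ∧ z = !u) ∨ (x = !u ∧ y = u ∧ z = !u) ∨
      (x = !u ∧ y = !u ∧ z = u)) := by
  intro u x y z v w
  cases x <;> cases y <;> cases z <;> cases u <;> cases v <;> cases w <;> simp

/-- A vertex with exactly three distinct neighbours has exactly one of its own colour. -/
theorem three_neighbours (c : HV → Bool) (hc : IsAlmostTCPM HG c) (v x y z : HV)
    (hxy : x ≠ y) (hxz : x ≠ z) (hyz : y ≠ z)
    (hv : ∀ w, HG.Adj v w ↔ w = x ∨ w = y ∨ w = z) :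
    (c x = c v ∧ c y = !(c v) ∧ c z = !(c v)) ∨
    (c x = !(c v) ∧ c y = c v ∧ c z = !(c v)) ∨
    (c x = !(c v) ∧ c y = !(c v) ∧ c z = c v) := by
  have hx : HG.Adj v x := (hv x).2 (by simp)
  have hy : HG.Adj v y := (hv y).2 (by simp)
  have hz : HG.Adj v z := (hv z).2 (by simp)
  obtain ⟨w, ⟨hw, hcw⟩, hu⟩ := hc v ⟨x, y, hxy, hx, hy⟩
  have ux : c x = c v → x = w := fun h => hu x ⟨hx, h⟩
  have uy : c y = c v → y = w := fun h => hu y ⟨hy, h⟩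
  have uz : c z = c v → z = w := fun h => hu z ⟨hz, h⟩
  simp only [Bool.eq_not]
  rcases (hv w).1 hw with rfl | rfl | rfl
  · exact Or.inl ⟨hcw, fun h => hxy (uy h).symm, fun h => hxz (uz h).symm⟩
  · exact Or.inr (Or.inl ⟨fun h => hxy (ux h), hcw, fun h => hyz (uz h).symm⟩)
  · exact Or.inr (Or.inr ⟨fun h => hxz (ux h), fun h => hyz (uy h), hcw⟩)

set_option maxHeartbeats 4000000 in
/-- Any almost two-coloured perfect matching of `H` satisfies:
(1) exactly one of the edges `ab`, `mi`, `ln` is monochromatic;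
(2) `b`, `i`, `l` receive the same colour;
(3) `o`, `p`, `q`, `r` receive the colour opposite to that of `b`, `i`, `l`. -/
theorem stmt_3 (c : HV → Bool) (hc : IsAlmostTCPM HG c) :
    (((c HV.a = c HV.b) ∧ ¬(c HV.m = c HV.i) ∧ ¬(c HV.l = c HV.n)) ∨
     (¬(c HV.a = c HV.b) ∧ (c HV.m = c HV.i) ∧ ¬(c HV.l = c HV.n)) ∨
     (¬(c HV.a = c HV.b) ∧ ¬(c HV.m = c HV.i) ∧ (c HV.l = c HV.n))) ∧
    (c HV.b = c HV.i ∧ c HV.i = c HV.l) ∧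
    (c HV.o = !(c HV.b) ∧ c HV.p = !(c HV.b) ∧ c HV.q = !(c HV.b) ∧ c HV.r = !(c HV.b)) := by
  have h_b := three_neighbours c hc .b .a .c .d (by decide) (by decide) (by decide)
    (by intro w; cases w <;> simp [HG, HEdges])
  have h_c := three_neighbours c hc .c .b .e .f (by decide) (by decide) (by decide)
    (by intro w; cases w <;> simp [HG, HEdges])
  have h_e := three_neighbours c hc .e .c .f .i (by decide) (by decide) (by decide)
    (by intro w; cases w <;> simp [HG, HEdges])
  have h_f := three_neighbours c hc .f .c .e .j (by decide) (by decide) (by decide)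
    (by intro w; cases w <;> simp [HG, HEdges])
  have h_d := three_neighbours c hc .d .b .g .h (by decide) (by decide) (by decide)
    (by intro w; cases w <;> simp [HG, HEdges])
  have h_g := three_neighbours c hc .g .d .h .k (by decide) (by decide) (by decide)
    (by intro w; cases w <;> simp [HG, HEdges])
  have h_h := three_neighbours c hc .h .d .g .l (by decide) (by decide) (by decide)
    (by intro w; cases w <;> simp [HG, HEdges])
  have h_i := three_neighbours c hc .i .e .m .o (by decide) (by decide) (by decide)
    (by intro w; cases w <;> simp [HG, HEdges])
  have h_j := three_neighbours c hc .j .f .k .o (by decide) (by decide) (by decide)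
    (by intro w; cases w <;> simp [HG, HEdges])
  have h_k := three_neighbours c hc .k .g .j .p (by decide) (by decide) (by decide)
    (by intro w; cases w <;> simp [HG, HEdges])
  have h_l := three_neighbours c hc .l .h .n .p (by decide) (by decide) (by decide)
    (by intro w; cases w <;> simp [HG, HEdges])
  have h_o := three_neighbours c hc .o .i .j .q (by decide) (by decide) (by decide)
    (by intro w; cases w <;> simp [HG, HEdges])
  have h_p := three_neighbours c hc .p .k .l .r (by decide) (by decide) (by decide)
    (by intro w; cases w <;> simp [HG, HEdges])
  clear hc
  obtain ⟨hbi, hbj, hcef⟩ := triangle_forces _ _ _ _ _ _ h_c h_e h_f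
  obtain ⟨hbk, hbl, hdgh⟩ := triangle_forces _ _ _ _ _ _ h_d h_g h_h
  clear h_c h_e h_f h_d h_g h_h
  rw [← hbi, ← hbl]
  rw [← hbi] at h_i h_o
  rw [← hbj] at h_j h_k h_o
  rw [← hbk] at h_j h_k h_p
  rw [← hbl] at h_l h_p
  clear hbi hbj hbk hbl
  cases hb : c .b <;> simp only [hb] at * <;>
    rcases hcef with ⟨h1, h2, h3⟩ | ⟨h1, h2, h3⟩ | ⟨h1, h2, h3⟩ <;>
    rcases hdgh with ⟨h4, h5, h6⟩ | ⟨h4, h5, h6⟩ | ⟨h4, h5, h6⟩ <;>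
    simp_all
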